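/- arXiv:2003.00729 — 2 statements merged into one kernel-verified Lean document; each statement's English description precedes it below -/
import Mathlib

section
/- For all integers n, n_1, n_2 with 1 ≤ n_1 < n_2 ≤ n and n ≥ 9, the prime difference graph G_n contains a Hamilton path from n_1 to n_2, i.e., there exists a bijective sequence a_1, ..., a_n of {1,...,n} with a_1 = n_1, a_n = n_2, and |a_i - a_{i+1}| prime for each i. -/
/-- `a 0, ..., a (n-1)` is a Hamilton path of `{1,...,n}` with all consecutive
absolute differences prime. -/
def IsPrimeDiffHamPath (n : ℕ) (a : ℕ → ℤ) : Prop :=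
  Set.BijOn a (Set.Ico 0 n) (Set.Icc 1 (n : ℤ)) ∧
  (∀ i, i + 1 < n → ((a i - a (i + 1)).natAbs).Prime)

/-!
Differences `2`, `3` and `5` already suffice. For `9 ≤ n ≤ 13` a depth-first search finds all the
paths; from there we induct on `n` in steps of `5`. On five consecutive integers the graph is the
`5`-cycle `1, 3, 5, 2, 4`, so adjacent vertices are joined by a Hamilton path of the block. If
exactly one endpoint lies in `{1, ..., 5}`, run through these five numbers first and then jump to
`6` or `7`. Otherwise, up to the reflection `x ↦ n + 1 - x`, both endpoints are at most `m = n - 5`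
and `m - 1` or `m` is an interior vertex `c` of a Hamilton path of `{1, ..., m}`. The two
neighbours of `c` on this path are among `c - 2`, `c - 3`, `c - 5`, so the path uses an edge from
`c` to `c - 2` or `c - 3`, and such an edge can be rerouted through `{m + 1, ..., m + 5}`.
-/

open Finset SimpleGraph

section HamPath

variable {V : Type*} [DecidableEq V] {G : SimpleGraph V} {S S₁ S₂ B : Finset V} {s t c d x y : V}

/-- `S` is the vertex set of a path of `G` from `s` to `t`, i.e. the subgraph induced by `G` on `S`
has a Hamilton path from `s` to `t`. -/
def HasHamPath (G : SimpleGraph V) (S : Finset V) (s t : V) : Prop :=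
  ∃ p : G.Walk s t, p.IsPath ∧ p.support.toFinset = S

/-- The subgraph induced by `G` on `S` is Hamilton-connected: any two distinct vertices are the
endpoints of a Hamilton path. -/
def IsHamConnected (G : SimpleGraph V) (S : Finset V) : Prop :=
  ∀ s ∈ S, ∀ t ∈ S, s ≠ t → HasHamPath G S s t

/-- An edge from `c` to `d` can be rerouted through all of `B`: some path of `G` from `c` to `d`
has exactly the vertices of `B` in its interior. -/
def HasDetour (G : SimpleGraph V) (B : Finset V) (c d : V) : Prop :=
  ∃ u v, G.Adj c u ∧ HasHamPath G B u v ∧ G.Adj v d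

namespace HasHamPath

theorem singleton (G : SimpleGraph V) (x : V) : HasHamPath G {x} x x :=
  ⟨.nil, .nil, by simp⟩

theorem left_mem (h : HasHamPath G S s t) : s ∈ S := by
  obtain ⟨p, -, rfl⟩ := h
  simp

theorem symm (h : HasHamPath G S s t) : HasHamPath G S t s := by
  obtain ⟨p, hp, rfl⟩ := h
  exact ⟨p.reverse, hp.reverse, by simp⟩

theorem append (h₁ : HasHamPath G S₁ s x) (hxy : G.Adj x y) (h₂ : HasHamPath G S₂ y t)
    (hS : Disjoint S₁ S₂) : HasHamPath G (S₁ ∪ S₂) s t := by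
  obtain ⟨p, hp, rfl⟩ := h₁
  obtain ⟨q, hq, rfl⟩ := h₂
  have hsupp : (p.append (.cons hxy q)).support = p.support ++ q.support := by
    simp [Walk.support_append]
  refine ⟨p.append (.cons hxy q), ?_, by rw [hsupp, List.toFinset_append]⟩
  rw [Walk.isPath_def, hsupp]
  exact hp.support_nodup.append hq.support_nodup (List.disjoint_toFinset_iff_disjoint.mp hS)

end HasHamPath

theorem HasDetour.symm (h : HasDetour G B c d) : HasDetour G B d c := by
  obtain ⟨u, v, hcu, huv, hvd⟩ := h
  exact ⟨v, u, hvd.symm, huv.symm, hcu.symm⟩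

namespace HasHamPath

theorem append_detour (h₁ : HasHamPath G S₁ s c) (hB : HasDetour G B c d)
    (h₂ : HasHamPath G S₂ d t) (hS : Disjoint S₁ S₂) (hS₁ : Disjoint S₁ B) (hS₂ : Disjoint S₂ B) :
    HasHamPath G (S₁ ∪ S₂ ∪ B) s t := by
  obtain ⟨u, v, hcu, huv, hvd⟩ := hB
  rw [union_assoc, union_comm S₂ B]
  exact h₁.append hcu (huv.append hvd h₂ hS₂.symm) (disjoint_union_right.mpr ⟨hS₁, hS⟩)

theorem image {W : Type*} [DecidableEq W] {H : SimpleGraph W} (h : HasHamPath G S s t) (f : G →g H)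
    (hf : Function.Injective f) : HasHamPath H (S.image f) (f s) (f t) := by
  obtain ⟨p, hp, rfl⟩ := h
  exact ⟨p.map f, hp.map hf, by ext; simp⟩

theorem exists_split (h : HasHamPath G S s t) (hc : c ∈ S) (hct : c ≠ t) :
    ∃ S₁ S₂ y, HasHamPath G S₁ s c ∧ G.Adj c y ∧ HasHamPath G S₂ y t ∧ Disjoint S₁ S₂ ∧
      S₁ ∪ S₂ = S := by
  obtain ⟨p, hp, rfl⟩ := h
  obtain ⟨q, r, hq, hr, rfl⟩ := hp.mem_support_iff_exists_append.mp (List.mem_toFinset.mp hc)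
  cases r with
  | nil => exact absurd rfl hct
  | @cons _ y _ hcy r =>
    have hsupp : (q.append (.cons hcy r)).support = q.support ++ r.support := by
      simp [Walk.support_append]
    rw [Walk.isPath_def, hsupp] at hp
    exact ⟨_, _, y, ⟨q, hq, rfl⟩, hcy, ⟨r, hr.of_cons, rfl⟩,
      List.disjoint_toFinset_iff_disjoint.mpr (List.disjoint_of_nodup_append hp),
      by rw [hsupp, List.toFinset_append]⟩

theorem union_of_detour (h : HasHamPath G S s t) (hc : c ∈ S) (hcs : c ≠ s) (hct : c ≠ t)
    (hSB : Disjoint S B)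
    (hB : ∀ x ∈ S, ∀ y ∈ S, x ≠ y → G.Adj c x → G.Adj c y → HasDetour G B c x ∨ HasDetour G B c y) :
    HasHamPath G (S ∪ B) s t := by
  obtain ⟨S₁, S₂, y, hsc, hcy, hyt, hdisj, rfl⟩ := h.exists_split hc hct
  obtain ⟨C, T, x, hcc, hcx, hxs, hCT, rfl⟩ := hsc.symm.exists_split hsc.symm.left_mem hcs
  have hx := hxs.left_mem
  have hy := hyt.left_mem
  obtain ⟨hS₁B, hS₂B⟩ := disjoint_union_left.mp hSB
  obtain ⟨hCB, hTB⟩ := disjoint_union_left.mp hS₁B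
  obtain ⟨hCS₂, hTS₂⟩ := disjoint_union_left.mp hdisj
  have hxy : x ≠ y := fun hxy => disjoint_left.mp hTS₂ hx (hxy ▸ hy)
  rcases hB x (by simp [hx]) y (by simp [hy]) hxy hcx hcy with hxc | hcy'
  · rw [union_comm C T, union_assoc T]
    exact hxs.symm.append_detour hxc.symm (hcc.append hcy hyt hCS₂)
      (disjoint_union_right.mpr ⟨hCT.symm, hTS₂⟩) hTB (disjoint_union_left.mpr ⟨hCB, hS₂B⟩)
  · exact hsc.append_detour hcy' hyt hdisj hS₁B hS₂B

theorem exists_bijOn (h : HasHamPath G S s t) :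
    ∃ a : ℕ → V, Set.BijOn a (Set.Ico 0 #S) S ∧ (∀ i, i + 1 < #S → G.Adj (a i) (a (i + 1))) ∧
      a 0 = s ∧ a (#S - 1) = t := by
  obtain ⟨p, hp, rfl⟩ := h
  rw [List.toFinset_card_of_nodup hp.support_nodup, p.length_support, Nat.add_sub_cancel]
  refine ⟨p.getVert, ⟨fun i _ => ?_, fun i hi j hj hij => ?_, fun v hv => ?_⟩,
    fun i hi => p.adj_getVert_succ (by omega), p.getVert_zero, p.getVert_length⟩
  · simp [p.getVert_mem_support i]
  · exact hp.getVert_injOn (Nat.le_of_lt_succ hi.2) (Nat.le_of_lt_succ hj.2) hij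
  · obtain ⟨i, hi, hip⟩ := p.mem_support_iff_exists_getVert.mp (by simpa using hv)
    exact ⟨i, ⟨i.zero_le, Nat.lt_succ_of_le hip⟩, hi⟩

end HasHamPath

/-- Depth-first search for a path from `x` to `t` whose interior vertices are exactly the `k`
entries of `L`. The explicit `k` makes the recursion structural, so that the search evaluates well
in the kernel. -/
def searchPath (G : SimpleGraph V) [DecidableRel G.Adj] (t : V) : ℕ → V → List V → Bool
  | 0, x, L => L.isEmpty && decide (G.Adj x t)
  | k + 1, x, L => L.any fun y => decide (G.Adj x y) && searchPath G t k y (L.erase y)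

variable [DecidableRel G.Adj] {k : ℕ} {L : List V}

theorem hasHamPath_insert_of_searchPath (h : searchPath G t k x L = true) (hL : L.Nodup)
    (hxt : x ≠ t) (hx : x ∉ L) (ht : t ∉ L) :
    HasHamPath G (insert x (insert t L.toFinset)) x t := by
  induction k generalizing x L with
  | zero =>
    simp only [searchPath, Bool.and_eq_true, List.isEmpty_iff, decide_eq_true_eq] at h
    obtain ⟨rfl, hadj⟩ := h
    simpa using (HasHamPath.singleton G x).append hadj (.singleton G t) (by simpa using hxt)
  | succ k ih =>
    simp only [searchPath, List.any_eq_true, Bool.and_eq_true, decide_eq_true_eq] at h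
    obtain ⟨y, hy, hxy, hk⟩ := h
    have hyt : y ≠ t := fun hyt => ht (hyt ▸ hy)
    have hrest := ih hk (hL.erase y) hyt (hL.not_mem_erase) fun h => ht (List.mem_of_mem_erase h)
    have herase : insert y (insert t (L.erase y).toFinset) = insert t L.toFinset := by
      ext z
      simp only [mem_insert, List.mem_toFinset, hL.mem_erase_iff]
      grind
    rw [herase] at hrest
    exact (HasHamPath.singleton G x).append hxy hrest (by simp [hxt, hx])

theorem hasHamPath_toFinset_of_searchPath (hL : L.Nodup) (hs : s ∈ L) (ht : t ∈ L) (hst : s ≠ t)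
    (h : searchPath G t k s ((L.erase s).erase t) = true) : HasHamPath G L.toFinset s t := by
  have hLs := hL.erase s
  convert hasHamPath_insert_of_searchPath h (hLs.erase t) hst ?_ hLs.not_mem_erase using 1
  · ext z
    simp only [mem_insert, List.mem_toFinset, hLs.mem_erase_iff, hL.mem_erase_iff]
    grind
  · exact fun hs' => hL.not_mem_erase (List.mem_of_mem_erase hs')

end HamPath

theorem isHamConnected_of_lt {V : Type*} [LinearOrder V] {G : SimpleGraph V} {S : Finset V}
    (h : ∀ s ∈ S, ∀ t ∈ S, s < t → HasHamPath G S s t) : IsHamConnected G S := by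
  intro s hs t ht hst
  rcases hst.lt_or_gt with hlt | hgt
  · exact h s hs t ht hlt
  · exact (h t ht s hs hgt).symm

namespace HasHamPath

theorem circulantGraph_add_right {A : Type*} [AddGroup A] [DecidableEq A] {J : Set A}
    {S : Finset A} {s t : A} (h : HasHamPath (circulantGraph J) S s t) (a : A) :
    HasHamPath (circulantGraph J) (S.image (· + a)) (s + a) (t + a) :=
  h.image ⟨(· + a), circulantGraph_adj_translate.mpr⟩ (add_left_injective a)

theorem circulantGraph_sub_left {A : Type*} [AddCommGroup A] [DecidableEq A] {J : Set A}
    {S : Finset A} {s t : A} (h : HasHamPath (circulantGraph J) S s t) (a : A) :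
    HasHamPath (circulantGraph J) (S.image (a - ·)) (a - s) (a - t) :=
  h.image ⟨(a - ·), fun {x y} hxy => by simpa [eq_comm, or_comm] using hxy⟩ sub_right_injective

variable {J : Set ℤ} {a b s t : ℤ}

theorem Icc_add (h : HasHamPath (circulantGraph J) (Icc a b) s t) (m : ℤ) :
    HasHamPath (circulantGraph J) (Icc (a + m) (b + m)) (s + m) (t + m) := by
  rw [← image_add_right_Icc]
  exact h.circulantGraph_add_right m

theorem Icc_sub_left (h : HasHamPath (circulantGraph J) (Icc a b) s t) (m : ℤ) :
    HasHamPath (circulantGraph J) (Icc (m - b) (m - a)) (m - s) (m - t) := by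
  have himage : (Icc a b).image (m - ·) = Icc (m - b) (m - a) := by
    ext z
    simp only [mem_image, mem_Icc]
    exact ⟨by rintro ⟨w, hw, rfl⟩; omega, fun hz => ⟨m - z, by omega, by omega⟩⟩
  rw [← himage]
  exact h.circulantGraph_sub_left m

end HasHamPath

/-- The graph on `ℤ` joining integers that differ by `2`, `3` or `5`. -/
def smallPrimeGraph : SimpleGraph ℤ := circulantGraph {2, 3, 5}

theorem smallPrimeGraph_adj {x y : ℤ} :
    smallPrimeGraph.Adj x y ↔
      (x - y).natAbs = 2 ∨ (x - y).natAbs = 3 ∨ (x - y).natAbs = 5 := by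
  simp only [smallPrimeGraph, circulantGraph_adj, Set.mem_insert_iff, Set.mem_singleton_iff]
  omega

instance : DecidableRel smallPrimeGraph.Adj := fun _ _ => decidable_of_iff' _ smallPrimeGraph_adj

theorem toFinset_intRange (a b : ℤ) : (Int.range a (b + 1)).toFinset = Icc a b := by
  ext z
  rw [List.mem_toFinset, Int.mem_range_iff, mem_Icc, Int.lt_add_one_iff]

theorem nodup_intRange (a b : ℤ) : (Int.range a b).Nodup :=
  List.nodup_range.map fun i j hij => by simpa using hij

theorem hasHamPath_Icc_of_searchPath {G : SimpleGraph ℤ} [DecidableRel G.Adj] {a b s t : ℤ} {k : ℕ}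
    (hs : s ∈ Icc a b) (ht : t ∈ Icc a b) (hst : s ≠ t)
    (h : searchPath G t k s (((Int.range a (b + 1)).erase s).erase t) = true) :
    HasHamPath G (Icc a b) s t := by
  rw [← toFinset_intRange, List.mem_toFinset] at hs ht
  rw [← toFinset_intRange]
  exact hasHamPath_toFinset_of_searchPath (nodup_intRange a _) hs ht hst h

theorem searchPath_Icc_five : ∀ s ∈ Icc (1 : ℤ) 5, ∀ t ∈ Icc (1 : ℤ) 5, smallPrimeGraph.Adj s t →
    searchPath smallPrimeGraph t 3 s (((Int.range 1 6).erase s).erase t) = true := by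
  decide +kernel

theorem searchPath_Icc_of_le_thirteen : ∀ n ∈ Icc (9 : ℤ) 13, ∀ s ∈ Icc 1 n, ∀ t ∈ Icc 1 n, s < t →
    searchPath smallPrimeGraph t (n.toNat - 2) s
      (((Int.range 1 (n + 1)).erase s).erase t) = true := by
  decide +kernel

theorem hasHamPath_five_block {m u v : ℤ} (hu : u ∈ Icc (m + 1) (m + 5))
    (hv : v ∈ Icc (m + 1) (m + 5)) (huv : smallPrimeGraph.Adj u v) :
    HasHamPath smallPrimeGraph (Icc (m + 1) (m + 5)) u v := by
  rw [mem_Icc] at hu hv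
  have hu' : u - m ∈ Icc (1 : ℤ) 5 := mem_Icc.mpr (by omega)
  have hv' : v - m ∈ Icc (1 : ℤ) 5 := mem_Icc.mpr (by omega)
  have huv' : smallPrimeGraph.Adj (u - m) (v - m) := by
    rwa [smallPrimeGraph_adj, sub_sub_sub_cancel_right, ← smallPrimeGraph_adj]
  have h := (hasHamPath_Icc_of_searchPath hu' hv' huv'.ne
    (searchPath_Icc_five _ hu' _ hv' huv')).Icc_add m
  rwa [sub_add_cancel, sub_add_cancel, add_comm 1 m, add_comm 5 m] at h

theorem hasDetour_five_block {m c d : ℤ} (hc : c = m - 1 ∨ c = m) (hd : d = c - 2 ∨ d = c - 3) :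
    HasDetour smallPrimeGraph (Icc (m + 1) (m + 5)) c d := by
  obtain ⟨u, v, hu, hv, hcu, huv, hvd⟩ : ∃ u v, u ∈ Icc (m + 1) (m + 5) ∧ v ∈ Icc (m + 1) (m + 5) ∧
      smallPrimeGraph.Adj c u ∧ smallPrimeGraph.Adj u v ∧ smallPrimeGraph.Adj v d := by
    simp only [mem_Icc, smallPrimeGraph_adj]
    rcases hc with rfl | rfl <;> rcases hd with rfl | rfl
    · exact ⟨m + 4, m + 2, by omega⟩
    · exact ⟨m + 4, m + 1, by omega⟩
    · exact ⟨c + 3, c + 1, by omega⟩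
    · exact ⟨c + 5, c + 2, by omega⟩
  exact ⟨u, v, hcu, hasHamPath_five_block hu hv huv, hvd⟩

theorem Icc_union_Icc_add_one {a m b : ℤ} (ham : a ≤ m + 1) (hmb : m ≤ b) :
    Icc a m ∪ Icc (m + 1) b = Icc a b := by
  ext z
  simp only [mem_union, mem_Icc]
  omega

theorem disjoint_Icc_Icc_add_one (a m b : ℤ) : Disjoint (Icc a m) (Icc (m + 1) b) :=
  disjoint_left.mpr fun z => by simp only [mem_Icc]; omega

theorem HasHamPath.Icc_add_five {a m c s t : ℤ} (h : HasHamPath smallPrimeGraph (Icc a m) s t)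
    (hc : c = m - 1 ∨ c = m) (hac : a ≤ c) (hcs : c ≠ s) (hct : c ≠ t) :
    HasHamPath smallPrimeGraph (Icc a (m + 5)) s t := by
  rw [← Icc_union_Icc_add_one (by omega : a ≤ m + 1) (by omega : m ≤ m + 5)]
  refine h.union_of_detour (mem_Icc.mpr (by omega)) hcs hct (disjoint_Icc_Icc_add_one ..)
    fun x hx y hy hxy hcx hcy => ?_
  rw [mem_Icc] at hx hy
  rw [smallPrimeGraph_adj] at hcx hcy
  have hxy' : (x = c - 2 ∨ x = c - 3) ∨ (y = c - 2 ∨ y = c - 3) := by omega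
  exact hxy'.imp (hasDetour_five_block hc) (hasDetour_five_block hc)

theorem exists_adj_adj_six_or_seven : ∀ s ∈ Icc (1 : ℤ) 5, ∀ y ∈ ({6, 7} : Finset ℤ),
    ∃ x ∈ Icc (1 : ℤ) 5, smallPrimeGraph.Adj s x ∧ smallPrimeGraph.Adj x y := by
  decide

theorem IsHamConnected.hasHamPath_of_mem_Icc_five {m s t : ℤ}
    (h : IsHamConnected smallPrimeGraph (Icc 1 m)) (hm : 2 ≤ m) (hs : s ∈ Icc 1 5)
    (ht : t ∈ Icc 6 (m + 5)) : HasHamPath smallPrimeGraph (Icc 1 (m + 5)) s t := by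
  obtain ⟨y, hy, hyt⟩ : ∃ y ∈ ({6, 7} : Finset ℤ), y ≠ t := exists_mem_ne (by decide) t
  obtain ⟨x, hx, hsx, hxy⟩ := exists_adj_adj_six_or_seven s hs y hy
  have hfirst : HasHamPath smallPrimeGraph (Icc 1 5) s x := hasHamPath_five_block (m := 0) hs hx hsx
  have hrest : HasHamPath smallPrimeGraph (Icc 6 (m + 5)) y t := by
    rw [mem_insert, mem_singleton] at hy
    rw [mem_Icc] at ht
    have h' := (h (y - 5) (mem_Icc.mpr (by omega)) (t - 5) (mem_Icc.mpr (by omega))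
      (by omega)).Icc_add 5
    rwa [sub_add_cancel, sub_add_cancel] at h'
  rw [← Icc_union_Icc_add_one (by omega : (1 : ℤ) ≤ 5 + 1) (by omega : 5 ≤ m + 5)]
  exact hfirst.append hxy hrest (disjoint_Icc_Icc_add_one ..)

theorem IsHamConnected.hasHamPath_Icc_add_five {a m s t : ℤ}
    (h : IsHamConnected smallPrimeGraph (Icc a m)) (hs : s ∈ Icc a m) (ht : t ∈ Icc a (m - 2))
    (hst : s ≠ t) : HasHamPath smallPrimeGraph (Icc a (m + 5)) s t := by
  rw [mem_Icc] at ht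
  have hpath := h s hs t (mem_Icc.mpr (by omega)) hst
  by_cases hsm : s = m
  · exact hpath.Icc_add_five (.inl rfl) (by omega) (by omega) (by omega)
  · exact hpath.Icc_add_five (.inr rfl) (by omega) (Ne.symm hsm) (by omega)

theorem IsHamConnected.Icc_add_five {m : ℤ} (h : IsHamConnected smallPrimeGraph (Icc 1 m))
    (hm : 9 ≤ m) : IsHamConnected smallPrimeGraph (Icc 1 (m + 5)) := by
  refine isHamConnected_of_lt fun s hs t ht hst => ?_
  rw [mem_Icc] at hs ht
  rcases le_or_gt t 7 with ht7 | ht7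
  · exact h.hasHamPath_Icc_add_five (mem_Icc.mpr (by omega)) (mem_Icc.mpr (by omega)) hst.ne
  rcases le_or_gt s 5 with hs5 | hs5
  · exact h.hasHamPath_of_mem_Icc_five (by omega) (mem_Icc.mpr ⟨hs.1, hs5⟩)
      (mem_Icc.mpr ⟨by omega, ht.2⟩)
  · have hrefl := (h.hasHamPath_Icc_add_five (s := m + 6 - s) (t := m + 6 - t)
      (mem_Icc.mpr (by omega)) (mem_Icc.mpr (by omega)) (by omega)).Icc_sub_left (m + 6)
    rwa [sub_sub_cancel, sub_sub_cancel, add_sub_add_left_eq_sub, add_sub_assoc] at hrefl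

theorem isHamConnected_Icc (n : ℕ) (hn : 9 ≤ n) :
    IsHamConnected smallPrimeGraph (Icc 1 (n : ℤ)) := by
  induction n using Nat.strong_induction_on with
  | _ n ih =>
    by_cases hn13 : n ≤ 13
    · exact isHamConnected_of_lt fun s hs t ht hst => hasHamPath_Icc_of_searchPath hs ht hst.ne
        (searchPath_Icc_of_le_thirteen n (mem_Icc.mpr (by omega)) s hs t ht hst)
    · obtain ⟨m, rfl⟩ : ∃ m, n = m + 5 := ⟨n - 5, by omega⟩
      exact_mod_cast (ih m (by omega) (by omega)).Icc_add_five (by omega)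

theorem prime_natAbs_sub_of_adj {x y : ℤ} (h : smallPrimeGraph.Adj x y) :
    (x - y).natAbs.Prime := by
  rcases smallPrimeGraph_adj.mp h with h | h | h <;> rw [h] <;> norm_num

theorem prime_diff_ham_path_any_endpoints (n n₁ n₂ : ℕ) (hn : 9 ≤ n)
    (h1 : 1 ≤ n₁) (h12 : n₁ < n₂) (h2 : n₂ ≤ n) :
    ∃ a : ℕ → ℤ, IsPrimeDiffHamPath n a ∧ a 0 = n₁ ∧ a (n - 1) = n₂ := by
  have hpath : HasHamPath smallPrimeGraph (Icc 1 (n : ℤ)) n₁ n₂ :=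
    isHamConnected_Icc n hn _ (mem_Icc.mpr (by omega)) _ (mem_Icc.mpr (by omega)) (by omega)
  obtain ⟨a, hbij, hadj, hfirst, hlast⟩ := hpath.exists_bijOn
  have hcard : #(Icc 1 (n : ℤ)) = n := by simp
  rw [hcard, coe_Icc] at hbij
  rw [hcard] at hadj hlast
  exact ⟨a, ⟨hbij, fun i hi => prime_natAbs_sub_of_adj (hadj i hi)⟩, hfirst, hlast⟩
end

section
/- For every integer n ≥ 7 and every list of integers ℓ_1, ..., ℓ_k with each ℓ_i ≥ 3 and ℓ_1 + ... + ℓ_k = n, the prime difference graph G_n admits a 2-factor whose cycles have lengths exactly ℓ_1, ..., ℓ_k. -/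
/-- The finite set `V ⊆ ℤ` carries a cycle all of whose edges have prime difference. -/
def HasPrimeDiffCycle (V : Finset ℤ) : Prop :=
  ∃ c : ℕ → ℤ, Set.BijOn c (Set.Ico 0 V.card) ↑V ∧
    (∀ i, i + 1 < V.card → ((c i - c (i + 1)).natAbs).Prime) ∧
    ((c (V.card - 1) - c 0).natAbs).Prime

/-!
Translating a 2-factor of `G_n` past one of `G_m` gives a 2-factor of `G_{m+n}`, so the realizable
multisets of cycle lengths form an additive submonoid. A cycle through the edge `{n - 2, n}` can be
rerouted through `n + 1, …, n + 5` so as to become five longer and contain `{n + 3, n + 5}`. Five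
explicit 2-factors thus give all singletons `{m}` with `5 ≤ m`, and likewise all `{m, 3}`,
`{m, 3, 3}` and `{m, 4}`; the last three kinds absorb the multisets `{3}`, `{3, 3}` and `{4}`, the
only multisets of 3s and 4s which are not sums of explicit realizable ones.
-/

namespace PrimeDiff

/-- Adjacency in the prime difference graph, extended to all of `ℤ`. -/
def Adj (a b : ℤ) : Prop :=
  (a - b).natAbs.Prime

instance : DecidableRel Adj := fun a b => inferInstanceAs (Decidable (a - b).natAbs.Prime)

instance : Std.Symm Adj where
  symm a b h := by rwa [Adj, ← neg_sub, Int.natAbs_neg]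

theorem adj_add_left_iff (c a b : ℤ) : Adj (c + a) (c + b) ↔ Adj a b := by
  simp only [Adj, add_sub_add_left_eq_sub]

instance (l : List ℤ) : Decidable ((l : Cycle ℤ).Chain Adj) :=
  match l with
  | [] => isTrue trivial
  | a :: l => decidable_of_iff _ (Cycle.chain_coe_cons Adj a l).symm

/-- A 2-factor of the prime difference graph on `{1, …, n}`, each cycle being encoded by a list of
its vertices in cyclic order. -/
structure IsTwoFactor (n : ℕ) (C : Multiset (List ℤ)) : Prop where
  bind_eq : C.bind (↑) = (Finset.Icc 1 (n : ℤ)).val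
  chain : ∀ l ∈ C, (l : Cycle ℤ).Chain Adj

noncomputable instance (n : ℕ) (C : Multiset (List ℤ)) : Decidable (IsTwoFactor n C) :=
  decidable_of_iff (C.bind (↑) = (Finset.Icc 1 (n : ℤ)).val ∧ ∀ l ∈ C, (l : Cycle ℤ).Chain Adj)
    ⟨fun h => ⟨h.1, h.2⟩, fun h => ⟨h.bind_eq, h.chain⟩⟩

theorem Icc_one_add_val (m n : ℕ) :
    (Finset.Icc 1 ((m + n : ℕ) : ℤ)).val =
      (Finset.Icc 1 (m : ℤ)).val + (Finset.Icc 1 (n : ℤ)).val.map ((m : ℤ) + ·) := by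
  have hmap : (Finset.Icc 1 (n : ℤ)).val.map ((m : ℤ) + ·) = (Finset.Icc (m + 1 : ℤ) (m + n)).val :=
    Multiset.map_add_left_Icc _ _ _
  have hdisj : Disjoint (Finset.Icc 1 (m : ℤ)) (Finset.Icc (m + 1 : ℤ) (m + n)) := by
    rw [Finset.disjoint_left]
    intro x
    simp only [Finset.mem_Icc]
    omega
  rw [hmap, ← Finset.disjUnion_val _ _ hdisj]
  congr 1
  ext x
  simp only [Finset.mem_disjUnion, Finset.mem_Icc]
  omega

theorem IsTwoFactor.sum_map_length {n : ℕ} {C : Multiset (List ℤ)} (h : IsTwoFactor n C) :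
    (C.map List.length).sum = n := by
  simpa [Multiset.card_bind, Function.comp_def] using congrArg Multiset.card h.bind_eq

theorem IsTwoFactor.add {m n : ℕ} {C D : Multiset (List ℤ)} (hC : IsTwoFactor m C)
    (hD : IsTwoFactor n D) : IsTwoFactor (m + n) (C + D.map (List.map ((m : ℤ) + ·))) where
  bind_eq := by
    rw [Icc_one_add_val, ← hC.bind_eq, ← hD.bind_eq, Multiset.map_bind, Multiset.add_bind,
      Multiset.bind_map]
    rfl
  chain l hl := by
    rcases Multiset.mem_add.1 hl with hl | hl
    · exact hC.chain l hl
    · obtain ⟨k, hk, rfl⟩ := Multiset.mem_map.1 hl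
      rw [← Cycle.map_coe, Cycle.chain_map]
      exact (hD.chain k hk).imp fun a b => (adj_add_left_iff m a b).2

/-- The multisets of cycle lengths of 2-factors of prime difference graphs. -/
def realizable : AddSubmonoid (Multiset ℕ) where
  carrier := {s | ∃ n C, IsTwoFactor n C ∧ C.map List.length = s}
  zero_mem' := ⟨0, 0, by decide⟩
  add_mem' := by
    rintro _ _ ⟨m, C, hC, rfl⟩ ⟨n, D, hD, rfl⟩
    refine ⟨m + n, _, hC.add hD, ?_⟩
    simp only [Multiset.map_add, Multiset.map_map, Function.comp_def, List.length_map]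

/-- The path `n - 2, p, n`, which the edge `{n - 2, n}` closes to a cycle. -/
def closablePath (n : ℤ) (p : List ℤ) : List ℤ :=
  (n - 2) :: (p ++ [n])

theorem chain_closablePath_iff {n : ℤ} {p : List ℤ} :
    (closablePath n p : Cycle ℤ).Chain Adj ↔ (closablePath n p).IsChain Adj := by
  have hclose : Adj n (n - 2) := by
    rw [Adj, sub_sub_cancel]
    decide
  rw [closablePath, Cycle.chain_coe_cons, List.append_assoc, List.singleton_append,
    ← List.cons_append, List.isChain_append_cons_cons]
  simp only [List.cons_append, hclose, List.isChain_singleton, and_true]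

/-- The interior of the path obtained from the reversal of `closablePath n p` by prepending `n + 3`
and appending `n + 1, n + 4, n + 2, n + 5`. -/
def extendInterior (n : ℤ) (p : List ℤ) : List ℤ :=
  (closablePath n p).reverse ++ [n + 1, n + 4, n + 2]

theorem isChain_closablePath_extendInterior {n : ℤ} {p : List ℤ}
    (h : (closablePath n p).IsChain Adj) :
    (closablePath (n + 5) (extendInterior n p)).IsChain Adj := by
  have hreverse : (n :: (p.reverse ++ [n - 2])).IsChain Adj := by
    have := List.isChain_reverse.2 (h.imp fun _ _ => symm)
    simpa only [closablePath, List.reverse_cons, List.reverse_append, List.reverse_nil,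
      List.nil_append, List.singleton_append, List.cons_append] using this
  have hstart : Adj (n + 5 - 2) n := by
    rw [Adj, show n + 5 - 2 - n = 3 by ring]
    decide
  have hjoin : Adj (n - 2) (n + 1) := by
    rw [Adj, show n - 2 - (n + 1) = -3 by ring]
    decide
  have hend : [n + 1, n + 4, n + 2, n + 5].IsChain Adj := by
    simp only [List.isChain_cons_cons, List.isChain_singleton, adj_add_left_iff]
    decide
  have hshape : closablePath (n + 5) (extendInterior n p) =
      (n + 5 - 2) :: n :: (p.reverse ++ (n - 2) :: (n + 1) :: [n + 4, n + 2, n + 5]) := by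
    simp [closablePath, extendInterior]
  rw [hshape, List.isChain_cons_cons, ← List.cons_append, List.isChain_append_cons_cons]
  exact ⟨hstart, hreverse, hjoin, hend⟩

theorem IsTwoFactor.extend {n : ℕ} {p : List ℤ} {C : Multiset (List ℤ)}
    (h : IsTwoFactor n (closablePath n p ::ₘ C)) :
    IsTwoFactor (n + 5) (closablePath (n + 5) (extendInterior n p) ::ₘ C) where
  bind_eq := by
    have hfive : (Finset.Icc 1 ((5 : ℕ) : ℤ)).val = {1, 2, 3, 4, 5} := by decide
    have hfirst : (n : ℤ) + 5 - 2 = n + 3 := by ring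
    rw [Icc_one_add_val, hfive, ← h.bind_eq, Multiset.cons_bind, Multiset.cons_bind,
      extendInterior, closablePath.eq_def (n + 5), hfirst]
    simp only [← Multiset.cons_coe, ← Multiset.coe_add, Multiset.coe_reverse, Multiset.coe_nil,
      Multiset.insert_eq_cons, ← Multiset.singleton_add, Multiset.map_add, Multiset.map_singleton]
    abel
  chain := by
    obtain ⟨hpath, hC⟩ := Multiset.forall_mem_cons.1 h.chain
    rw [chain_closablePath_iff] at hpath
    exact Multiset.forall_mem_cons.2
      ⟨chain_closablePath_iff.2 (isChain_closablePath_extendInterior hpath), hC⟩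

/-- Some `G_n` has a 2-factor consisting of a cycle of length `m` through the edge `{n - 2, n}` and
of cycles whose lengths form the multiset `s`. -/
def HasExtendableTwoFactor (m : ℕ) (s : Multiset ℕ) : Prop :=
  ∃ (n : ℕ) (p : List ℤ) (C : Multiset (List ℤ)), IsTwoFactor n (closablePath n p ::ₘ C) ∧
    p.length + 2 = m ∧ C.map List.length = s

theorem HasExtendableTwoFactor.cons_mem_realizable {m : ℕ} {s : Multiset ℕ}
    (h : HasExtendableTwoFactor m s) : m ::ₘ s ∈ realizable := by
  obtain ⟨n, p, C, hC, rfl, rfl⟩ := h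
  exact ⟨n, _, hC, by simp [closablePath]⟩

theorem HasExtendableTwoFactor.add_five {m : ℕ} {s : Multiset ℕ}
    (h : HasExtendableTwoFactor m s) : HasExtendableTwoFactor (m + 5) s := by
  obtain ⟨n, p, C, hC, rfl, rfl⟩ := h
  exact ⟨n + 5, extendInterior n p, C, mod_cast hC.extend,
    by simp [extendInterior, closablePath], rfl⟩

theorem hasExtendableTwoFactor_of_forall_lt_ten {s : Multiset ℕ}
    (h : ∀ m, 5 ≤ m → m < 10 → HasExtendableTwoFactor m s) {m : ℕ} (hm : 5 ≤ m) :
    HasExtendableTwoFactor m s := by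
  induction m using Nat.strong_induction_on with
  | _ m ih =>
    rcases lt_or_ge m 10 with hlt | hge
    · exact h m hm hlt
    · rw [← Nat.sub_add_cancel hm]
      exact (ih (m - 5) (by lia) (by lia)).add_five

theorem singleton_mem_realizable {m : ℕ} (hm : 5 ≤ m) : {m} ∈ realizable := by
  refine (hasExtendableTwoFactor_of_forall_lt_ten (fun m _ _ => ?_) hm).cons_mem_realizable
  interval_cases m
  · exact ⟨5, [1, 4, 2], 0, by decide⟩
  · exact ⟨6, [2, 5, 3, 1], 0, by decide⟩
  · exact ⟨7, [3, 1, 6, 4, 2], 0, by decide⟩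
  · exact ⟨8, [1, 4, 2, 7, 5, 3], 0, by decide⟩
  · exact ⟨9, [2, 4, 1, 3, 5, 8, 6], 0, by decide⟩

theorem cons_three_mem_realizable {m : ℕ} (hm : 5 ≤ m) : m ::ₘ {3} ∈ realizable := by
  refine (hasExtendableTwoFactor_of_forall_lt_ten (fun m _ _ => ?_) hm).cons_mem_realizable
  interval_cases m
  · exact ⟨8, [1, 3, 5], {[2, 4, 7]}, by decide⟩
  · exact ⟨9, [2, 4, 1, 6], {[3, 5, 8]}, by decide⟩
  · exact ⟨10, [1, 3, 5, 2, 7], {[4, 6, 9]}, by decide⟩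
  · exact ⟨11, [2, 4, 1, 3, 6, 8], {[5, 7, 10]}, by decide⟩
  · exact ⟨12, [3, 1, 4, 2, 5, 7, 9], {[6, 8, 11]}, by decide⟩

theorem cons_three_three_mem_realizable {m : ℕ} (hm : 5 ≤ m) : m ::ₘ {3, 3} ∈ realizable := by
  refine (hasExtendableTwoFactor_of_forall_lt_ten (fun m _ _ => ?_) hm).cons_mem_realizable
  interval_cases m
  · exact ⟨11, [2, 4, 6], {[1, 3, 8], [5, 7, 10]}, by decide⟩
  · exact ⟨12, [3, 1, 4, 9], {[2, 5, 7], [6, 8, 11]}, by decide⟩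
  · exact ⟨13, [4, 1, 3, 6, 8], {[2, 7, 9], [5, 10, 12]}, by decide⟩
  · exact ⟨14, [1, 3, 5, 2, 4, 7], {[6, 9, 11], [8, 10, 13]}, by decide⟩
  · exact ⟨15, [2, 4, 1, 3, 5, 7, 10], {[6, 8, 11], [9, 12, 14]}, by decide⟩

theorem cons_four_mem_realizable {m : ℕ} (hm : 5 ≤ m) : m ::ₘ {4} ∈ realizable := by
  refine (hasExtendableTwoFactor_of_forall_lt_ten (fun m _ _ => ?_) hm).cons_mem_realizable
  interval_cases m
  · exact ⟨9, [2, 4, 6], {[1, 3, 5, 8]}, by decide⟩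
  · exact ⟨10, [1, 3, 5, 7], {[2, 4, 6, 9]}, by decide⟩
  · exact ⟨11, [2, 4, 1, 3, 6], {[5, 7, 10, 8]}, by decide⟩
  · exact ⟨12, [3, 1, 4, 2, 5, 7], {[6, 8, 11, 9]}, by decide⟩
  · exact ⟨13, [4, 1, 3, 5, 10, 8, 6], {[2, 7, 12, 9]}, by decide⟩

theorem mem_realizable_of_five_le {s : Multiset ℕ} (hs : ∀ m ∈ s, 5 ≤ m) : s ∈ realizable := by
  rw [← Multiset.sum_map_singleton s]
  refine AddSubmonoid.multiset_sum_mem _ _ fun t ht => ?_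
  obtain ⟨m, hm, rfl⟩ := Multiset.mem_map.1 ht
  exact singleton_mem_realizable (hs m hm)

theorem nsmul_mem_of_forall_lt_two_mul {M : Type*} [AddMonoid M] {S : AddSubmonoid M} {x : M}
    {k : ℕ} (hk : 0 < k) (h : ∀ i, k ≤ i → i < 2 * k → i • x ∈ S) {a : ℕ} (ha : k ≤ a) :
    a • x ∈ S := by
  induction a using Nat.strong_induction_on with
  | _ a ih =>
    rcases lt_or_ge a (2 * k) with hlt | hge
    · exact h a ha hlt
    · rw [← Nat.sub_add_cancel ha, add_nsmul]
      exact S.add_mem (ih (a - k) (by lia) (by lia)) (h k le_rfl (by lia))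

theorem nsmul_three_mem_realizable {a : ℕ} (ha : 3 ≤ a) : a • {3} ∈ realizable := by
  refine nsmul_mem_of_forall_lt_two_mul three_pos (fun i _ _ => ?_) ha
  interval_cases i
  · exact ⟨9, {[1, 3, 8], [2, 5, 7], [4, 6, 9]}, by decide⟩
  · exact ⟨12, {[1, 3, 8], [2, 4, 7], [5, 10, 12], [6, 9, 11]}, by decide⟩
  · exact ⟨15, {[1, 3, 6], [2, 4, 7], [5, 10, 12], [8, 13, 15], [9, 11, 14]}, by decide⟩

theorem nsmul_four_mem_realizable {b : ℕ} (hb : 2 ≤ b) : b • {4} ∈ realizable := by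
  refine nsmul_mem_of_forall_lt_two_mul two_pos (fun i _ _ => ?_) hb
  interval_cases i
  · exact ⟨8, {[1, 3, 6, 8], [2, 4, 7, 5]}, by decide⟩
  · exact ⟨12, {[1, 3, 6, 8], [2, 4, 11, 9], [5, 7, 10, 12]}, by decide⟩

theorem three_add_four_mem_realizable : {3} + {4} ∈ realizable :=
  ⟨7, {[1, 3, 6], [2, 4, 7, 5]}, by decide⟩

theorem nsmul_three_add_four_mem_realizable {a : ℕ} (ha : 1 ≤ a) :
    a • {3} + {4} ∈ realizable := by
  rcases lt_or_ge a 4 with hlt | hge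
  · interval_cases a
    · simpa only [one_nsmul] using three_add_four_mem_realizable
    · exact ⟨10, {[1, 3, 6], [2, 4, 9], [5, 7, 10, 8]}, by decide⟩
    · exact ⟨13, {[1, 3, 6], [2, 4, 9], [5, 7, 12], [8, 10, 13, 11]}, by decide⟩
  · rw [← Nat.sub_add_cancel ha, succ_nsmul, add_assoc]
    exact add_mem (nsmul_three_mem_realizable (by lia)) three_add_four_mem_realizable

theorem three_add_nsmul_four_mem_realizable {b : ℕ} (hb : 1 ≤ b) :
    {3} + b • {4} ∈ realizable := by
  rcases lt_or_ge b 3 with hlt | hge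
  · interval_cases b
    · simpa only [one_nsmul] using three_add_four_mem_realizable
    · exact ⟨11, {[1, 3, 6], [2, 4, 11, 9], [5, 7, 10, 8]}, by decide⟩
  · rw [← Nat.sub_add_cancel hb, succ_nsmul', ← add_assoc]
    exact add_mem three_add_four_mem_realizable (nsmul_four_mem_realizable (by lia))

/-- The multisets of lengths at least 3 that are not realizable: in `{1, …, 6}` every triangle
contains both 1 and 6, and the graph on `{1, …, 4}` is a path. -/
def exceptional : Finset (Multiset ℕ) :=
  {{3}, {3, 3}, {4}}

theorem mem_realizable_or_mem_exceptional (a b : ℕ) :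
    a • {3} + b • {4} ∈ realizable ∨ a • {3} + b • {4} ∈ exceptional := by
  rcases (by lia : b = 0 ∨ b = 1 ∨ 2 ≤ b) with rfl | rfl | hb
  · rcases lt_or_ge a 3 with hlt | hge
    · interval_cases a
      · exact .inl (zero_mem _)
      · exact .inr (by decide)
      · exact .inr (by decide)
    · exact .inl (by simpa using nsmul_three_mem_realizable hge)
  · rcases Nat.eq_zero_or_pos a with rfl | ha
    · exact .inr (by decide)
    · exact .inl (by simpa using nsmul_three_add_four_mem_realizable ha)
  · left
    rcases (by lia : a = 0 ∨ a = 1 ∨ a = 2 ∨ 3 ≤ a) with rfl | rfl | rfl | ha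
    · simpa using nsmul_four_mem_realizable hb
    · simpa using three_add_nsmul_four_mem_realizable (by lia : 1 ≤ b)
    · have hrest := three_add_nsmul_four_mem_realizable (by lia : 1 ≤ b - 1)
      convert add_mem three_add_four_mem_realizable hrest using 1
      rw [← Nat.sub_add_cancel (by lia : 1 ≤ b)]
      simp only [succ_nsmul, Nat.add_sub_cancel]
      abel
    · exact add_mem (nsmul_three_mem_realizable ha) (nsmul_four_mem_realizable hb)

theorem eq_nsmul_three_add_nsmul_four_add_filter {s : Multiset ℕ} (hs : ∀ m ∈ s, 3 ≤ m) :
    s = s.count 3 • {3} + s.count 4 • {4} + s.filter (5 ≤ ·) := by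
  have hcount (m : ℕ) (hm : m < 3) : s.count m = 0 :=
    Multiset.count_eq_zero_of_notMem fun hmem => (hs m hmem).not_gt hm
  ext m
  simp only [Multiset.count_add, Multiset.count_nsmul, Multiset.count_singleton,
    Multiset.count_filter]
  grind

theorem mem_realizable_of_three_le {s : Multiset ℕ} (hs : ∀ m ∈ s, 3 ≤ m) (hne : s ∉ exceptional) :
    s ∈ realizable := by
  have hlarge : ∀ m ∈ s.filter (5 ≤ ·), 5 ≤ m := fun m hm => Multiset.of_mem_filter hm
  rw [eq_nsmul_three_add_nsmul_four_add_filter hs] at hne ⊢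
  generalize s.filter (5 ≤ ·) = t at hlarge hne ⊢
  rcases mem_realizable_or_mem_exceptional (s.count 3) (s.count 4) with hsmall | hsmall
  · exact add_mem hsmall (mem_realizable_of_five_le hlarge)
  generalize (s.count 3 • {3} + s.count 4 • {4} : Multiset ℕ) = u at hsmall hne ⊢
  have ht : t ≠ 0 := by
    rintro rfl
    exact hne (by rwa [add_zero])
  obtain ⟨m, hm⟩ := Multiset.exists_mem_of_ne_zero ht
  obtain ⟨t, rfl⟩ := Multiset.exists_cons_of_mem hm
  obtain ⟨hm, ht⟩ := Multiset.forall_mem_cons.1 hlarge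
  rw [Multiset.add_cons, ← Multiset.cons_add]
  refine add_mem ?_ (mem_realizable_of_five_le ht)
  simp only [exceptional, Finset.mem_insert, Finset.mem_singleton] at hsmall
  rcases hsmall with rfl | rfl | rfl
  · exact cons_three_mem_realizable hm
  · exact cons_three_three_mem_realizable hm
  · exact cons_four_mem_realizable hm

section Families

variable {ι : Type*} [Fintype ι]

theorem exists_equiv_comp_eq_of_map_univ_eq {κ β : Type*} [Fintype κ] {f : ι → β} {g : κ → β}
    (h : Finset.univ.val.map f = Finset.univ.val.map g) : ∃ e : ι ≃ κ, g ∘ e = f := by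
  classical
  have hcard (b : β) : Fintype.card {i // f i = b} = Fintype.card {j // g j = b} := by
    have hcount := congrArg (Multiset.count b) h
    rw [Multiset.count_map, Multiset.count_map] at hcount
    simp only [eq_comm (a := b)] at hcount
    rw [Fintype.card_subtype, Fintype.card_subtype]
    exact hcount
  let e := Equiv.ofFiberEquiv fun b => Fintype.equivOfCardEq (hcard b)
  exact ⟨e, funext fun i => Equiv.ofFiberEquiv_map _ i⟩

theorem exists_family_of_map_eq {α β : Type*} {C : Multiset α} {f : α → β} {g : ι → β}
    (h : C.map f = Finset.univ.val.map g) :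
    ∃ c : ι → α, Finset.univ.val.map c = C ∧ ∀ i, f (c i) = g i := by
  classical
  obtain ⟨e, he⟩ : ∃ e : ι ≃ C, (fun x : C => f x) ∘ e = g :=
    exists_equiv_comp_eq_of_map_univ_eq (by rw [← h, Multiset.map_univ])
  refine ⟨fun i => e i, ?_, congrFun he⟩
  calc Finset.univ.val.map (fun i => (e i : α))
      = (Finset.univ.val.map e).map (fun x : C => (x : α)) := (Multiset.map_map _ _ _).symm
    _ = Finset.univ.val.map (fun x : C => (x : α)) := by rw [Multiset.map_univ_val_equiv]
    _ = C := Multiset.map_univ_coe C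

namespace IsTwoFactor

variable {n : ℕ} {c : ι → List ℤ}

theorem sum_coe (h : IsTwoFactor n (Finset.univ.val.map c)) :
    ∑ i, (c i : Multiset ℤ) = (Finset.Icc 1 (n : ℤ)).val := by
  rw [← h.bind_eq, Multiset.bind_map]
  rfl

theorem nodup (h : IsTwoFactor n (Finset.univ.val.map c)) (i : ι) : (c i).Nodup := by
  have hle := Finset.single_le_sum (fun j _ => Multiset.zero_le (c j : Multiset ℤ))
    (Finset.mem_univ i)
  exact Multiset.coe_nodup.1 (Multiset.nodup_of_le (h.sum_coe ▸ hle) (Finset.nodup _))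

theorem disjoint_toFinset (h : IsTwoFactor n (Finset.univ.val.map c)) {i j : ι} (hij : i ≠ j) :
    Disjoint (c i).toFinset (c j).toFinset := by
  have hle := Finset.add_le_sum (fun k _ => Multiset.zero_le (c k : Multiset ℤ))
    (Finset.mem_univ i) (Finset.mem_univ j) hij
  have hnodup := Multiset.nodup_of_le (h.sum_coe ▸ hle) (Finset.nodup _)
  rw [Multiset.nodup_add, Multiset.coe_disjoint] at hnodup
  exact List.disjoint_toFinset_iff_disjoint.2 hnodup.2.2

theorem biUnion_toFinset (h : IsTwoFactor n (Finset.univ.val.map c)) :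
    Finset.univ.biUnion (fun i => (c i).toFinset) = Finset.Icc 1 (n : ℤ) := by
  ext x
  rw [← Finset.mem_val (s := Finset.Icc _ _), ← h.sum_coe]
  simp only [Finset.mem_biUnion, Multiset.mem_sum, List.mem_toFinset, Multiset.mem_coe]

end IsTwoFactor

end Families

theorem bijOn_getD_toFinset {α : Type*} [DecidableEq α] {l : List α} (hl : l.Nodup) (d : α) :
    Set.BijOn (l.getD · d) (Set.Ico 0 l.length) l.toFinset := by
  refine ⟨fun i hi => ?_, fun i hi j hj hij => ?_, fun x hx => ?_⟩
  · simp only [List.getD_eq_getElem _ _ hi.2, List.coe_toFinset, Set.mem_ofPred_eq,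
      List.getElem_mem]
  · simp only [List.getD_eq_getElem _ _ hi.2, List.getD_eq_getElem _ _ hj.2] at hij
    exact hl.getElem_inj_iff.1 hij
  · obtain ⟨i, hi, rfl⟩ := List.getElem_of_mem (List.mem_toFinset.1 hx)
    exact ⟨i, ⟨Nat.zero_le i, hi⟩, List.getD_eq_getElem _ _ hi⟩

theorem hasPrimeDiffCycle_toFinset {l : List ℤ} (hne : l ≠ []) (hnodup : l.Nodup)
    (hchain : (l : Cycle ℤ).Chain Adj) : HasPrimeDiffCycle l.toFinset := by
  obtain ⟨a, t, rfl⟩ := List.exists_cons_of_ne_nil hne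
  rw [Cycle.chain_coe_cons, ← List.cons_append, List.isChain_append] at hchain
  obtain ⟨hpath, -, hclose⟩ := hchain
  rw [HasPrimeDiffCycle, List.toFinset_card_of_nodup hnodup]
  refine ⟨((a :: t).getD · 0), bijOn_getD_toFinset hnodup 0, fun i hi => ?_, ?_⟩
  · simp only [List.getD_eq_getElem _ _ hi, List.getD_eq_getElem _ _ (Nat.lt_of_succ_lt hi)]
    exact List.isChain_iff_getElem.1 hpath i hi
  · refine hclose _ ?_ a rfl
    simp [List.getLast?_eq_getElem?]

end PrimeDiff

open PrimeDiff in
theorem prime_diff_any_two_factor_general {ι : Type*} [Fintype ι] (ns : ι → ℕ)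
    (hns : ∀ i, 3 ≤ ns i) (hne : Finset.univ.val.map ns ∉ exceptional) :
    ∃ V : ι → Finset ℤ,
      (∀ i j, i ≠ j → Disjoint (V i) (V j)) ∧
      (Finset.univ.biUnion V = Finset.Icc (1 : ℤ) (∑ i, ns i : ℕ)) ∧
      (∀ i, (V i).card = ns i) ∧
      (∀ i, HasPrimeDiffCycle (V i)) := by
  obtain ⟨n, C, hC, hlengths⟩ := mem_realizable_of_three_le (by simpa using hns) hne
  obtain rfl : ∑ i, ns i = n := by rw [← hC.sum_map_length, hlengths]; rfl
  obtain ⟨c, rfl, hlength⟩ := exists_family_of_map_eq hlengths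
  refine ⟨fun i => (c i).toFinset, fun i j => hC.disjoint_toFinset, hC.biUnion_toFinset,
    fun i => ?_, fun i => hasPrimeDiffCycle_toFinset ?_ (hC.nodup i) (hC.chain _ ?_)⟩
  · rw [List.toFinset_card_of_nodup (hC.nodup i), hlength i]
  · exact List.ne_nil_of_length_pos (by have := hns i; have := hlength i; lia)
  · exact Multiset.mem_map_of_mem c (Finset.mem_univ i)

/-- `G_n` admits a 2-factor with prescribed cycle lengths, each at least 3 (any 2-factor of `K_n`). -/
theorem prime_diff_any_two_factor (n k : ℕ) (hn : 7 ≤ n)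
    (ns : Fin k → ℕ) (hns : ∀ i, 3 ≤ ns i) (hsum : ∑ i, ns i = n) :
    ∃ V : Fin k → Finset ℤ,
      (∀ i j, i ≠ j → Disjoint (V i) (V j)) ∧
      (Finset.univ.biUnion V = Finset.Icc (1 : ℤ) n) ∧
      (∀ i, (V i).card = ns i) ∧
      (∀ i, HasPrimeDiffCycle (V i)) := by
  subst hsum
  refine prime_diff_any_two_factor_general ns hns fun hexc => ?_
  have hsmall : ∀ s ∈ PrimeDiff.exceptional, s.sum ≤ 6 := by decide
  exact absurd (hn.trans (hsmall _ hexc)) (by decide)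
end
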